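/- arXiv:1305.3570 — 3 statements merged into one kernel-verified Lean document; each statement's English description precedes it below -/
import Mathlib

section
/- For any simple graph G with n vertices, m edges, clique number ω ≥ 2 and Σ_i d_i² the sum of squared degrees, one has 2m·ν·ω ≤ (ω-1)n², where ν = n·(Σ_i d_i²)/(4m²); equivalently, ω·Σ_i d_i² ≤ 2(ω-1)·n·m. -/
open Finset

namespace SimpleGraph

variable {V : Type*} [Fintype V] [DecidableEq V] (G : SimpleGraph V) [DecidableRel G.Adj]

/-- The degree of `i` when every vertex `j` carries the weight `w j`. -/
def weightedDegree (w : V → ℝ) (i : V) : ℝ := ∑ j ∈ G.neighborFinset i, w j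

variable {G}

/-- The weighted inequality when the support of the weight is a clique. -/
theorem weighted_degree_turan_of_isClique {r : ℕ} (hfree : G.CliqueFree (r + 1))
    {w : V → ℝ} (hw : ∀ i, 0 ≤ w i)
    (hclique : G.IsClique (univ.filter fun i => w i ≠ 0 : Finset V)) :
    r * ∑ i, w i * G.weightedDegree w i ^ 2 ≤
      (r - 1) * (∑ i, w i) * ∑ i, w i * G.weightedDegree w i := by
  set S : Finset V := univ.filter fun i => w i ≠ 0 with hS
  set W := ∑ i, w i with hW
  have hcard : #S ≤ r := by
    by_contra! h
    exact hfree.mono h S ⟨hclique, rfl⟩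
  have hsum : ∀ f : V → ℝ, (∀ i, w i = 0 → f i = 0) → ∑ i, f i = ∑ i ∈ S, f i := by
    intro f hf
    refine (sum_subset (subset_univ S) fun i _ hi => hf i ?_).symm
    simpa [hS] using hi
  have hdeg : ∀ i ∈ S, G.weightedDegree w i = W - w i := by
    intro i hi
    rw [hW, ← sum_erase_add _ _ (mem_univ i), add_sub_cancel_right]
    refine sum_subset (fun j hj => ?_) fun j hj hij => ?_
    · simpa using ((G.mem_neighborFinset i j).1 hj).ne'
    · by_contra h
      exact hij ((G.mem_neighborFinset i j).2
        (hclique hi (by simpa [hS] using h) (by simpa using (ne_of_mem_erase hj).symm)))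
  have hpair : ∀ i j, i ≠ j → w i + w j ≤ W := by
    intro i j hij
    rw [← sum_pair hij]
    exact sum_le_sum_of_subset_of_nonneg (subset_univ _) fun k _ _ => hw k
  have hmono : MonovaryOn w (fun i => w i * (W - w i)) S := by
    intro i _ j _ h
    by_contra! hlt
    have hij : i ≠ j := by rintro rfl; exact lt_irrefl _ h
    nlinarith [mul_nonneg (sub_nonneg.2 hlt.le) (sub_nonneg.2 (hpair i j hij))]
  have hcheb := hmono.sum_mul_sum_le_card_mul_sum
  have hnonneg : 0 ≤ ∑ i ∈ S, w i * (w i * (W - w i)) :=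
    sum_nonneg fun i _ => mul_nonneg (hw i) (mul_nonneg (hw i)
      (sub_nonneg.2 (single_le_sum (fun k _ => hw k) (mem_univ i))))
  have hle := hcheb.trans
    (mul_le_mul_of_nonneg_right (Nat.cast_le (α := ℝ).2 hcard) hnonneg)
  rw [← hsum w fun _ h => h, ← hW] at hle
  have hlin : ∑ i, w i * G.weightedDegree w i = ∑ i ∈ S, w i * (W - w i) := by
    rw [hsum _ fun i h => by simp [h]]
    exact sum_congr rfl fun i hi => by rw [hdeg i hi]
  have hsq : ∑ i, w i * G.weightedDegree w i ^ 2 =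
      W * ∑ i ∈ S, w i * (W - w i) - ∑ i ∈ S, w i * (w i * (W - w i)) := by
    rw [hsum _ fun i h => by simp [h], mul_sum, ← sum_sub_distrib]
    exact sum_congr rfl fun i hi => by rw [hdeg i hi]; ring
  rw [hlin, hsq]
  linarith

/-- A weighted form of the degree Turán inequality: in a `K_{r+1}`-free graph, moving weight
between nonadjacent vertices reduces it to weights supported on a clique. -/
theorem weighted_degree_turan {r : ℕ} (hfree : G.CliqueFree (r + 1))
    (w : V → ℝ) (hw : ∀ i, 0 ≤ w i) :
    r * ∑ i, w i * G.weightedDegree w i ^ 2 ≤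
      (r - 1) * (∑ i, w i) * ∑ i, w i * G.weightedDegree w i := by
  induction hk : #(univ.filter fun i => w i ≠ 0) using Nat.strong_induction_on generalizing w with
  | _ k ih =>
  by_cases hclique : G.IsClique (univ.filter fun i => w i ≠ 0 : Finset V)
  · exact weighted_degree_turan_of_isClique hfree hw hclique
  obtain ⟨u, hu, v, hv, huv, hadj⟩ : ∃ u, w u ≠ 0 ∧ ∃ v, w v ≠ 0 ∧ u ≠ v ∧ ¬G.Adj u v := by
    simpa [IsClique, Set.Pairwise] using hclique
  have hu0 : 0 < w u := (hw u).lt_of_ne' hu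
  have hv0 : 0 < w v := (hw v).lt_of_ne' hv
  let shift (x y : V) (i : V) : ℝ := if i = x then w u + w v else if i = y then 0 else w i
  have hshift : ∀ x y, x ≠ y → w x ≠ 0 → w y ≠ 0 → w x + w y = w u + w v → ¬G.Adj x y →
      (∑ i, shift x y i = ∑ i, w i) ∧
      G.weightedDegree (shift x y) x = G.weightedDegree w x ∧
      G.weightedDegree (shift x y) y = G.weightedDegree w y ∧
      r * ∑ i, shift x y i * G.weightedDegree (shift x y) i ^ 2 ≤
        (r - 1) * (∑ i, shift x y i) *
          ∑ i, shift x y i * G.weightedDegree (shift x y) i := by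
    intro x y hxy hx hy hxyw hn
    refine ⟨?_, ?_, ?_, ih _ ?_ _ ?_ rfl⟩
    · have h : ∀ f : V → ℝ, ∑ i, f i = f x + (f y + ∑ i ∈ (univ.erase x).erase y, f i) := by
        intro f
        rw [add_sum_erase _ _ (by simp [hxy.symm]), add_sum_erase _ _ (mem_univ x)]
      rw [h, h w, sum_congr (g := w) rfl fun i hi => by
        simp only [mem_erase] at hi
        simp [shift, hi.1, hi.2.1]]
      simp only [shift, hxy.symm, if_true, if_false]
      linarith
    · refine sum_congr rfl fun i hi => ?_
      rw [mem_neighborFinset] at hi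
      have h₁ : i ≠ x := hi.ne'
      have h₂ : i ≠ y := by rintro rfl; exact hn hi
      simp [shift, h₁, h₂]
    · refine sum_congr rfl fun i hi => ?_
      rw [mem_neighborFinset] at hi
      have h₁ : i ≠ y := hi.ne'
      have h₂ : i ≠ x := by rintro rfl; exact hn hi.symm
      simp [shift, h₁, h₂]
    · rw [← hk]
      refine card_lt_card ⟨fun i hi => ?_, fun h => ?_⟩
      · simp only [mem_filter, mem_univ, true_and, shift] at hi ⊢
        split_ifs at hi with h₁ h₂
        · rwa [h₁]
        · exact absurd rfl hi
        · exact hi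
      · have := h (show y ∈ _ by simpa using hy)
        simp [shift, hxy.symm] at this
    · intro i
      simp only [shift]
      split_ifs
      · positivity
      · exact le_rfl
      · exact hw i
  obtain ⟨hsa, hau, hav, ha⟩ := hshift u v huv hu hv rfl hadj
  obtain ⟨hsb, hbv, hbu, hb⟩ := hshift v u huv.symm hv hu (add_comm _ _) fun h => hadj h.symm
  set a := shift u v with haDef
  set b := shift v u with hbDef
  set l := w u / (w u + w v) with hl
  have hl0 : 0 ≤ l := by positivity
  have hl1 : 0 ≤ 1 - l := by
    rw [hl, sub_nonneg, div_le_one (by positivity)]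
    linarith
  have hcomb : ∀ i, w i = l * a i + (1 - l) * b i := by
    intro i
    by_cases h₁ : i = u
    · subst h₁
      simp only [haDef, hbDef, shift, huv, if_true, if_false, hl]
      field_simp
      ring
    · by_cases h₂ : i = v
      · subst h₂
        simp only [haDef, hbDef, shift, h₁, if_true, if_false, hl]
        field_simp
        ring
      · simp only [haDef, hbDef, shift, h₁, h₂, if_false]
        ring
  have hdeg : ∀ i, G.weightedDegree w i =
      l * G.weightedDegree a i + (1 - l) * G.weightedDegree b i := by
    intro i
    simp only [weightedDegree, mul_sum, ← sum_add_distrib]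
    exact sum_congr rfl fun j _ => hcomb j
  have hfix : ∀ i, (a i = w i ∧ b i = w i) ∨
      (G.weightedDegree a i = G.weightedDegree w i ∧
        G.weightedDegree b i = G.weightedDegree w i) := by
    intro i
    by_cases h₁ : i = u
    · subst h₁; exact Or.inr ⟨hau, hbu⟩
    · by_cases h₂ : i = v
      · subst h₂; exact Or.inr ⟨hav, hbv⟩
      · left
        simp [haDef, hbDef, shift, h₁, h₂]
  have hlin : ∑ i, w i * G.weightedDegree w i =
      l * ∑ i, a i * G.weightedDegree a i + (1 - l) * ∑ i, b i * G.weightedDegree b i := by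
    simp only [mul_sum, ← sum_add_distrib]
    refine sum_congr rfl fun i _ => ?_
    rcases hfix i with ⟨h₁, h₂⟩ | ⟨h₁, h₂⟩
    · rw [h₁, h₂, hdeg i]; ring
    · rw [h₁, h₂, hcomb i]; ring
  have hconv : ∑ i, w i * G.weightedDegree w i ^ 2 ≤
      l * ∑ i, a i * G.weightedDegree a i ^ 2 +
        (1 - l) * ∑ i, b i * G.weightedDegree b i ^ 2 := by
    simp only [mul_sum, ← sum_add_distrib]
    refine sum_le_sum fun i _ => ?_
    rcases hfix i with ⟨h₁, h₂⟩ | ⟨h₁, h₂⟩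
    · rw [h₁, h₂, hdeg i]
      have := mul_nonneg (hw i) (mul_nonneg (mul_nonneg hl0 hl1)
        (sq_nonneg (G.weightedDegree a i - G.weightedDegree b i)))
      linarith
    · rw [h₁, h₂, hcomb i]; exact le_of_eq (by ring)
  rw [hsa] at ha
  rw [hsb] at hb
  rw [hlin]
  have h := mul_le_mul_of_nonneg_left hconv (Nat.cast_nonneg (α := ℝ) r)
  have ha' := mul_le_mul_of_nonneg_left ha hl0
  have hb' := mul_le_mul_of_nonneg_left hb hl1
  linarith

end SimpleGraph

theorem degree_turan {V : Type*} [Fintype V] [DecidableEq V]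
    (G : SimpleGraph V) [DecidableRel G.Adj]
    (n m ω : ℕ) (hn : n = Fintype.card V) (hm : m = G.edgeFinset.card) (hm0 : 0 < m)
    (hω2 : 2 ≤ ω) (hfree : G.CliqueFree (ω + 1)) :
    ω * ∑ i, (G.degree i) ^ 2 ≤ 2 * (ω - 1) * n * m := by
  have h := SimpleGraph.weighted_degree_turan hfree (fun _ => 1) fun _ => zero_le_one
  have hdeg : ∀ i, G.weightedDegree (fun _ => 1) i = G.degree i := by
    simp [SimpleGraph.weightedDegree]
  have hsum : ∑ i, (G.degree i : ℝ) = 2 * m := by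
    rw [hm]
    exact_mod_cast G.sum_degrees_eq_twice_card_edges
  simp only [hdeg, one_mul, hsum, sum_const, card_univ, ← hn, nsmul_eq_mul, mul_one] at h
  have hω : ((ω - 1 : ℕ) : ℝ) = ω - 1 := by
    rw [Nat.cast_sub (by lia), Nat.cast_one]
  rw [← Nat.cast_le (α := ℝ)]
  push_cast [hω]
  linarith
end

section
/- For any simple graph G with n vertices, m edges and t triangles, t ≥ (Σ_i d_i² - n·m)/3; equivalently, with ν = n·(Σ_i d_i²)/(4m²), t ≥ m(4mν - n²)/(3n). -/
open Finset

namespace SimpleGraph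

variable {V : Type*} [Fintype V] (G : SimpleGraph V) [DecidableRel G.Adj]

/-- Summing the degree of the second endpoint over all darts gives the sum of squared degrees. -/
theorem sum_sum_degree_neighborFinset :
    ∑ v, ∑ w ∈ G.neighborFinset v, G.degree w = ∑ v, G.degree v ^ 2 := by
  rw [sum_comm' (t' := univ) (s' := fun w => G.neighborFinset w) (by simp [adj_comm])]
  simp [sq]

variable [DecidableEq V]

/-- Each triangle accounts for at most six ordered triples of pairwise adjacent vertices. -/
theorem sum_card_inter_neighborFinset_le :
    ∑ v, ∑ w ∈ G.neighborFinset v, #(G.neighborFinset v ∩ G.neighborFinset w) ≤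
      6 * #(G.cliqueFinset 3) := by
  have hflags : #((G.cliqueFinset 3).sigma fun s => s.offDiag) = 6 * #(G.cliqueFinset 3) := by
    rw [card_sigma, sum_congr rfl (g := fun _ => 6), sum_const, smul_eq_mul, mul_comm]
    intro s hs
    rw [offDiag_card, ((G.mem_cliqueFinset_iff).1 hs).card_eq]
  have htriples : #((univ : Finset V).sigma fun v => (G.neighborFinset v).sigma fun w =>
      G.neighborFinset v ∩ G.neighborFinset w) =
      ∑ v, ∑ w ∈ G.neighborFinset v, #(G.neighborFinset v ∩ G.neighborFinset w) := by
    simp only [card_sigma]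
  rw [← hflags, ← htriples]
  refine card_le_card_of_injOn (fun p => ⟨{p.1, p.2.1, p.2.2}, (p.1, p.2.1)⟩) ?_ ?_
  · rintro ⟨a, b, c⟩ h
    simp only [mem_coe, mem_sigma, mem_univ, mem_inter, mem_neighborFinset, true_and] at h
    simp only [mem_coe, mem_sigma, mem_cliqueFinset_iff, is3Clique_triple_iff, mem_offDiag,
      mem_insert, true_or, or_true, true_and]
    exact ⟨⟨h.1, h.2.1, h.2.2⟩, h.1.ne⟩
  · rintro ⟨a, b, c⟩ h ⟨a', b', c'⟩ h' heq
    simp only [mem_coe, mem_sigma, mem_univ, mem_inter, mem_neighborFinset, true_and] at h h'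
    simp only [Sigma.mk.injEq, heq_eq_eq, Prod.mk.injEq] at heq
    obtain ⟨hs, rfl, rfl⟩ := heq
    have hc : c ∈ ({a, b, c'} : Finset V) := hs ▸ by simp
    have hca : c ≠ a := h.2.1.ne'
    have hcb : c ≠ b := h.2.2.ne'
    simp only [mem_insert, mem_singleton, hca, hcb, false_or] at hc
    rw [hc]

/-- The Moon–Moser counting inequality. -/
theorem sum_degree_sq_le :
    ∑ v, G.degree v ^ 2 ≤ Fintype.card V * #G.edgeFinset + 3 * #(G.cliqueFinset 3) := by
  have hpair (v w : V) : G.degree v + G.degree w ≤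
      Fintype.card V + #(G.neighborFinset v ∩ G.neighborFinset w) := by
    rw [← card_neighborFinset_eq_degree, ← card_neighborFinset_eq_degree,
      ← card_union_add_card_inter]
    gcongr
    exact card_le_univ _
  have hsum := sum_le_sum fun v (_ : v ∈ univ) =>
    sum_le_sum fun w (_ : w ∈ G.neighborFinset v) => hpair v w
  simp only [sum_add_distrib, sum_sum_degree_neighborFinset, sum_const, smul_eq_mul,
    card_neighborFinset_eq_degree, ← sq, ← sum_mul, sum_degrees_eq_twice_card_edges] at hsum
  have := G.sum_card_inter_neighborFinset_le
  nlinarith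

end SimpleGraph

theorem triangle_lower_bound {V : Type*} [Fintype V] [DecidableEq V]
    (G : SimpleGraph V) [DecidableRel G.Adj]
    (n m t : ℕ) (hn : n = Fintype.card V) (hm : m = G.edgeFinset.card)
    (ht : t = (G.cliqueFinset 3).card) :
    ((∑ i, (G.degree i : ℝ) ^ 2) - n * m) / 3 ≤ t := by
  subst hn hm ht
  have h : (∑ i, (G.degree i : ℝ) ^ 2) ≤
      Fintype.card V * #G.edgeFinset + 3 * #(G.cliqueFinset 3) := by
    exact_mod_cast G.sum_degree_sq_le
  linarith
end

section
/- Let c_h denote the number of h-cliques in a graph G on n vertices. Then for all h ≥ 2 with c_h > 0, the Moon–Moser inequality holds: c_{h+1}/c_h ≥ (h²·c_h/c_{h-1} - n)/(h² - 1). -/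
open Finset

/-- The common neighbors of the vertices in `s`. -/
def SimpleGraph.commonNeighborFinset {V : Type*} [Fintype V]
    (G : SimpleGraph V) [DecidableRel G.Adj] (s : Finset V) : Finset V :=
  {v | ∀ u ∈ s, G.Adj v u}

theorem SimpleGraph.mem_commonNeighborFinset {V : Type*} [Fintype V]
    {G : SimpleGraph V} [DecidableRel G.Adj] {s : Finset V} {v : V} :
    v ∈ G.commonNeighborFinset s ↔ ∀ u ∈ s, G.Adj v u := by
  simp [SimpleGraph.commonNeighborFinset]

/-- Double counting of the pairs consisting of a clique and one of its vertices. -/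
theorem SimpleGraph.sum_cliqueFinset_succ_sum_erase {V : Type*} [Fintype V] [DecidableEq V]
    (G : SimpleGraph V) [DecidableRel G.Adj] (k : ℕ) (f : Finset V → ℕ) :
    ∑ s ∈ G.cliqueFinset (k + 1), ∑ u ∈ s, f (s.erase u) =
      ∑ t ∈ G.cliqueFinset k, #(G.commonNeighborFinset t) * f t := by
  simp_rw [← smul_eq_mul, ← sum_const, sum_sigma']
  refine sum_bij' (fun p _ ↦ ⟨p.1.erase p.2, p.2⟩) (fun p _ ↦ ⟨insert p.2 p.1, p.2⟩)
    ?_ ?_ ?_ ?_ ?_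
  · rintro ⟨s, u⟩ hp
    simp only [mem_sigma, mem_cliqueFinset_iff, mem_commonNeighborFinset] at hp ⊢
    exact ⟨hp.1.erase_of_mem hp.2, fun v hv ↦
      hp.1.isClique hp.2 (mem_of_mem_erase hv) (ne_of_mem_erase hv).symm⟩
  · rintro ⟨t, v⟩ hp
    simp only [mem_sigma, mem_cliqueFinset_iff, mem_commonNeighborFinset] at hp ⊢
    exact ⟨hp.1.insert hp.2, mem_insert_self v t⟩
  · rintro ⟨s, u⟩ hp
    simp only [mem_sigma] at hp
    simp [insert_erase hp.2]
  · rintro ⟨t, v⟩ hp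
    simp only [mem_sigma, mem_commonNeighborFinset] at hp
    have hv : v ∉ t := fun hv ↦ G.irrefl (hp.2 v hv)
    simp [erase_insert hv]
  · simp

/-- A vertex outside the common neighborhood of `s` is a common neighbor of at most one of the sets
obtained from `s` by deleting a vertex. -/
theorem SimpleGraph.sum_card_commonNeighborFinset_erase_le {V : Type*} [Fintype V] [DecidableEq V]
    (G : SimpleGraph V) [DecidableRel G.Adj] {k : ℕ} {s : Finset V} (hs : #s = k + 1) :
    ∑ u ∈ s, #(G.commonNeighborFinset (s.erase u)) ≤
      Fintype.card V + k * #(G.commonNeighborFinset s) := by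
  have key (v : V) : #{u ∈ s | v ∈ G.commonNeighborFinset (s.erase u)} ≤
      1 + if v ∈ G.commonNeighborFinset s then k else 0 := by
    split_ifs with hv
    · exact (card_filter_le _ _).trans (by omega)
    · rw [add_zero, card_le_one]
      intro a ha b hb
      simp only [mem_filter, mem_commonNeighborFinset, mem_erase] at ha hb
      by_contra hab
      refine hv (mem_commonNeighborFinset.2 fun u hu ↦ ?_)
      by_cases hua : u = a
      · exact hb.2 u ⟨hua ▸ hab, hu⟩
      · exact ha.2 u ⟨hua, hu⟩
  calc ∑ u ∈ s, #(G.commonNeighborFinset (s.erase u))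
      = ∑ v, #{u ∈ s | v ∈ G.commonNeighborFinset (s.erase u)} := by
        simp_rw [card_filter]
        rw [sum_comm]
        simp
    _ ≤ ∑ v, (1 + if v ∈ G.commonNeighborFinset s then k else 0) :=
        sum_le_sum fun v _ ↦ key v
    _ = Fintype.card V + k * #(G.commonNeighborFinset s) := by
        simp [sum_add_distrib, mul_comm]

theorem SimpleGraph.sum_card_commonNeighborFinset {V : Type*} [Fintype V] [DecidableEq V]
    (G : SimpleGraph V) [DecidableRel G.Adj] (k : ℕ) :
    ∑ t ∈ G.cliqueFinset k, #(G.commonNeighborFinset t) = (k + 1) * #(G.cliqueFinset (k + 1)) := by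
  have hsum := G.sum_cliqueFinset_succ_sum_erase k fun _ ↦ 1
  simp only [mul_one, ← card_eq_sum_ones] at hsum
  rw [← hsum, sum_const_nat fun s hs ↦ (mem_cliqueFinset_iff.1 hs).card_eq, mul_comm]

/-- The Moon–Moser inequality with denominators cleared. -/
theorem SimpleGraph.sq_card_cliqueFinset_succ_le {V : Type*} [Fintype V] [DecidableEq V]
    (G : SimpleGraph V) [DecidableRel G.Adj] (k : ℕ) :
    ((k + 1) * #(G.cliqueFinset (k + 1))) ^ 2 ≤ #(G.cliqueFinset k) *
      (Fintype.card V * #(G.cliqueFinset (k + 1)) +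
        k * ((k + 2) * #(G.cliqueFinset (k + 2)))) := by
  rw [← sum_card_commonNeighborFinset]
  refine sq_sum_le_card_mul_sum_sq.trans (Nat.mul_le_mul_left _ ?_)
  simp_rw [sq]
  rw [← sum_cliqueFinset_succ_sum_erase G k fun t ↦ #(G.commonNeighborFinset t)]
  refine (sum_le_sum fun s hs ↦ G.sum_card_commonNeighborFinset_erase_le
    (mem_cliqueFinset_iff.1 hs).card_eq).trans_eq ?_
  rw [sum_add_distrib, ← mul_sum, sum_card_commonNeighborFinset, sum_const, smul_eq_mul, mul_comm]

theorem moon_moser {V : Type*} [Fintype V] [DecidableEq V]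
    (G : SimpleGraph V) [DecidableRel G.Adj]
    (n : ℕ) (hn : n = Fintype.card V)
    (c : ℕ → ℕ) (hc : ∀ h, c h = (G.cliqueFinset h).card)
    (h : ℕ) (h2 : 2 ≤ h) (hpos : 0 < c h) (hpos' : 0 < c (h - 1)) :
    ((h : ℝ) ^ 2 * (c h) / (c (h - 1)) - n) / (h ^ 2 - 1) ≤ (c (h + 1) : ℝ) / (c h) := by
  obtain ⟨k, rfl⟩ : ∃ k, h = k + 1 := ⟨h - 1, by omega⟩
  have key := G.sq_card_cliqueFinset_succ_le k
  rw [← hc, ← hc, ← hc, ← hn] at key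
  rw [Nat.add_sub_cancel] at hpos' ⊢
  have hk : (1 : ℝ) ≤ k := by exact_mod_cast (by omega : 1 ≤ k)
  have hR : (((k : ℝ) + 1) * c (k + 1)) ^ 2 ≤
      c k * (n * c (k + 1) + k * ((k + 2) * c (k + 2))) := by exact_mod_cast key
  have ha : (0 : ℝ) < c (k + 1) := by exact_mod_cast hpos
  have hb : (0 : ℝ) < c k := by exact_mod_cast hpos'
  push_cast
  rw [div_le_div_iff₀ (by nlinarith) ha, sub_mul, sub_le_iff_le_add, div_mul_eq_mul_div,
    div_le_iff₀ hb]
  rw [show k + 1 + 1 = k + 2 from rfl]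
  linarith
end
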